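/- Sufficiency half of the optimality condition: let S and A be nonempty finite types, P : A → Matrix S S ℝ with each P a row-stochastic, R : S → ℝ, and γ ∈ ℝ with 0 ≤ γ < 1. For a deterministic policy π : S → A let P^π be the matrix with P^π(s,j) = (P (π s))(s,j) and let V^π = (I − γ·P^π)⁻¹ *ᵥ R. If for every action a ∈ A the vector (P^π − P a) *ᵥ ((I − γ·P^π)⁻¹ *ᵥ R) has all components nonnegative, then for every deterministic policy π' : S → A we have V^π(s) ≥ V^{π'}(s) for all s ∈ S. -/

import Mathlib

/-!
Let `M = γ P^π'`, a nonnegative matrix with row sums less than `1`. If `M d ≤ d` and `m` minimizes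
`d`, then `(∑ j, M m j) d m ≤ (M d) m ≤ d m`, which forces `0 ≤ d m`. Hence `d ≥ 0`, so `1 - M`
reflects the order. If `P^π' V^π ≤ P^π V^π`, then
`(1 - γ P^π') V^π' = R = (1 - γ P^π) V^π ≤ (1 - γ P^π') V^π`, and therefore `V^π' ≤ V^π`.
-/

open Matrix BigOperators

/-- A matrix is row-stochastic if all entries are nonnegative and every row sums to 1. -/
def RowStochastic {S : Type*} [Fintype S] (P : Matrix S S ℝ) : Prop :=
  (∀ i j, 0 ≤ P i j) ∧ (∀ i, ∑ j, P i j = 1)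

/-- The transition matrix `P^π` of a deterministic policy `π`:
`P^π(s, j) = (P (π s))(s, j)`. -/
def polMat {S A : Type*} (P : A → Matrix S S ℝ) (π : S → A) : Matrix S S ℝ :=
  Matrix.of fun s j => P (π s) s j

/-- The value vector `V^π = (I - γ • P^π)⁻¹ *ᵥ R` of a deterministic policy `π`. -/
noncomputable def polVal {S A : Type*} [Fintype S] [DecidableEq S]
    (P : A → Matrix S S ℝ) (γ : ℝ) (R : S → ℝ) (π : S → A) : S → ℝ :=
  (1 - γ • polMat P π)⁻¹ *ᵥ R

/-- Strictly substochastic matrices: nonnegative entries and every row sum less than `1`. Discounted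
transition matrices `γ • P` are used only through this property, which absorbs the bound `γ < 1`. -/
def StrictlySubstochastic {S K : Type*} [Fintype S] [Semiring K] [PartialOrder K]
    (M : Matrix S S K) : Prop :=
  (∀ i j, 0 ≤ M i j) ∧ ∀ i, ∑ j, M i j < 1

namespace StrictlySubstochastic

section OrderedRing

variable {S K : Type*} [Fintype S] [Ring K] [LinearOrder K] [IsStrictOrderedRing K]
  {M : Matrix S S K}

theorem nonneg_of_mulVec_le (hM : StrictlySubstochastic M) {d : S → K} (hd : M *ᵥ d ≤ d) :
    0 ≤ d := by
  intro i
  have : Nonempty S := ⟨i⟩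
  obtain ⟨m, hmin⟩ := Finite.exists_min d
  have hrow : (∑ j, M m j) * d m ≤ d m :=
    calc (∑ j, M m j) * d m = ∑ j, M m j * d m := Finset.sum_mul ..
      _ ≤ ∑ j, M m j * d j :=
        Finset.sum_le_sum fun j _ => mul_le_mul_of_nonneg_left (hmin j) (hM.1 m j)
      _ ≤ d m := hd m
  have hprod : 0 ≤ (1 - ∑ j, M m j) * d m := by
    rwa [sub_mul, one_mul, sub_nonneg]
  exact ((mul_nonneg_iff_of_pos_left (sub_pos.2 (hM.2 m))).1 hprod).trans (hmin i)

theorem le_of_one_sub_mulVec_le [DecidableEq S] (hM : StrictlySubstochastic M) {v w : S → K}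
    (h : (1 - M) *ᵥ v ≤ (1 - M) *ᵥ w) : v ≤ w := by
  rw [← sub_nonneg, ← mulVec_sub, sub_mulVec, one_mulVec, sub_nonneg] at h
  exact sub_nonneg.1 (hM.nonneg_of_mulVec_le h)

end OrderedRing

theorem isUnit_one_sub {S K : Type*} [Fintype S] [DecidableEq S] [Field K] [LinearOrder K]
    [IsStrictOrderedRing K] {M : Matrix S S K} (hM : StrictlySubstochastic M) :
    IsUnit (1 - M) :=
  mulVec_injective_iff_isUnit.1 fun _ _ h =>
    le_antisymm (hM.le_of_one_sub_mulVec_le h.le) (hM.le_of_one_sub_mulVec_le h.ge)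

end StrictlySubstochastic

theorem RowStochastic.strictlySubstochastic_smul {S : Type*} [Fintype S] {Q : Matrix S S ℝ}
    (hQ : RowStochastic Q) {γ : ℝ} (hγ0 : 0 ≤ γ) (hγ1 : γ < 1) :
    StrictlySubstochastic (γ • Q) := by
  refine ⟨fun i j => mul_nonneg hγ0 (hQ.1 i j), fun i => ?_⟩
  simpa only [Matrix.smul_apply, smul_eq_mul, ← Finset.mul_sum, hQ.2 i, mul_one] using hγ1

section Policy

variable {S A : Type*} [Fintype S] {P : A → Matrix S S ℝ} {γ : ℝ}

theorem polMat_mulVec_apply (π : S → A) (v : S → ℝ) (s : S) :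
    (polMat P π *ᵥ v) s = (P (π s) *ᵥ v) s :=
  rfl

theorem strictlySubstochastic_smul_polMat (hP : ∀ a, StrictlySubstochastic (γ • P a))
    (π : S → A) : StrictlySubstochastic (γ • polMat P π) :=
  ⟨fun s => (hP (π s)).1 s, fun s => (hP (π s)).2 s⟩

variable [DecidableEq S]

theorem one_sub_smul_polMat_mulVec_polVal {π : S → A} (hπ : IsUnit (1 - γ • polMat P π))
    (R : S → ℝ) : (1 - γ • polMat P π) *ᵥ polVal P γ R π = R := by
  rw [polVal, mulVec_mulVec, mul_nonsing_inv _ ((isUnit_iff_isUnit_det _).1 hπ), one_mulVec]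

theorem polVal_le_polVal_of_polMat_mulVec_le (hγ0 : 0 ≤ γ) {R : S → ℝ} {π π' : S → A}
    (hπ : IsUnit (1 - γ • polMat P π)) (hπ' : StrictlySubstochastic (γ • polMat P π'))
    (h : polMat P π' *ᵥ polVal P γ R π ≤ polMat P π *ᵥ polVal P γ R π) :
    polVal P γ R π' ≤ polVal P γ R π := by
  apply hπ'.le_of_one_sub_mulVec_le
  calc (1 - γ • polMat P π') *ᵥ polVal P γ R π'
      = R := one_sub_smul_polMat_mulVec_polVal hπ'.isUnit_one_sub R
    _ = (1 - γ • polMat P π) *ᵥ polVal P γ R π := (one_sub_smul_polMat_mulVec_polVal hπ R).symm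
    _ ≤ (1 - γ • polMat P π') *ᵥ polVal P γ R π := by
        simp only [sub_mulVec, smul_mulVec]
        exact sub_le_sub_left (smul_le_smul_of_nonneg_left h hγ0) _

theorem optimal_of_nonneg_advantage_general (hP : ∀ a, StrictlySubstochastic (γ • P a))
    (R : S → ℝ) (hγ0 : 0 ≤ γ) (π : S → A)
    (h : ∀ a s, 0 ≤ ((polMat P π - P a) *ᵥ polVal P γ R π) s) (π' : S → A) :
    polVal P γ R π' ≤ polVal P γ R π := by
  have hunit := (strictlySubstochastic_smul_polMat hP π).isUnit_one_sub
  refine polVal_le_polVal_of_polMat_mulVec_le hγ0 hunit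
    (strictlySubstochastic_smul_polMat hP π') fun s => ?_
  rw [polMat_mulVec_apply π', ← sub_nonneg, ← Pi.sub_apply, ← sub_mulVec]
  exact h (π' s) s

end Policy

/-- Sufficiency half of the optimality condition. -/
theorem optimal_of_nonneg_advantage {S A : Type*} [Fintype S] [DecidableEq S] [Nonempty S]
    [Fintype A] [Nonempty A] (P : A → Matrix S S ℝ) (hP : ∀ a, RowStochastic (P a))
    (R : S → ℝ) (γ : ℝ) (hγ0 : 0 ≤ γ) (hγ1 : γ < 1) (π : S → A)
    (h : ∀ a : A, ∀ s : S, 0 ≤ ((polMat P π - P a) *ᵥ ((1 - γ • polMat P π)⁻¹ *ᵥ R)) s) :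
    ∀ π' : S → A, ∀ s : S, polVal P γ R π' s ≤ polVal P γ R π s :=
  optimal_of_nonneg_advantage_general
    (fun a => (hP a).strictlySubstochastic_smul hγ0 hγ1) R hγ0 π h
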